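/- If θ₁, θ₂, θ₃ ≥ 0 and θ₁ + θ₂ + θ₃ = π, then for any x₁, x₂, x₃ ∈ ℝ, letting (α₁, α₂, α₃) be the inner angles of the generalized Euclidean triangle of edge lengths e^{x₁}, e^{x₂}, e^{x₃} (with α_i opposite the edge of length e^{x_i}), one has Σ_{i=1}³ Λ(α_i) + Σ_{i=1}³ x_i(α_i − θ_i) ≥ Σ_{i=1}³ Λ(θ_i). -/

import Mathlib

/-- The Lobachevsky function `Λ(t) = -∫₀ᵗ log |2 sin s| ds`. -/
noncomputable def Lob (t : ℝ) : ℝ := -∫ s in (0 : ℝ)..t, Real.log |2 * Real.sin s|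

/-- The inner angle, opposite the edge of length `x i`, of the generalized Euclidean
triangle of edge lengths `x 0, x 1, x 2` (clamped arccos convention). -/
noncomputable def ang (i : Fin 3) (x : Fin 3 → ℝ) : ℝ :=
  Real.arccos (((x (i + 1)) ^ 2 + (x (i + 2)) ^ 2 - (x i) ^ 2) / (2 * x (i + 1) * x (i + 2)))

/-! `∑ Λ(αᵢ)` is concave on the simplex of triples of angles with sum `π`: its second derivative in
a direction `d` with `∑ dᵢ = 0` is `-∑ cot αᵢ dᵢ²`, which is nonpositive because
`cot α₀ cot α₁ + cot α₁ cot α₂ + cot α₂ cot α₀ = 1`. By the law of sines `log (2 sin αᵢ)` equals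
`xᵢ` up to a constant independent of `i`, so for a nondegenerate triangle the inequality says that
the graph of `∑ Λ` lies below its tangent plane at `α`. Lengthening all edges by `ε` makes the
triangle inequalities strict, so flat triangles follow by letting `ε → 0`. Once edge `i` is longer
than the other two together the angles are constant, and the energy is affine in `xᵢ` with slope
`π - θᵢ ≥ 0`; shrinking this edge until the triangle is flat does not increase the energy. -/

open Real Set Filter Topology EuclideanGeometry

lemma intervalIntegrable_log_two_mul_sin (a b : ℝ) :
    IntervalIntegrable (fun s => log |2 * sin s|) MeasureTheory.volume a b := by
  have hmero : MeromorphicOn (fun s : ℝ => 2 * sin s) (uIcc a b) := fun s _ =>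
    AnalyticAt.meromorphicAt (by fun_prop)
  simpa only [log_abs, Function.comp_def] using hmero.intervalIntegrable_log

lemma continuous_lob : Continuous Lob :=
  (intervalIntegral.continuous_primitive intervalIntegrable_log_two_mul_sin 0).neg

lemma hasDerivAt_lob {t : ℝ} (ht : sin t ≠ 0) : HasDerivAt Lob (-log (2 * sin t)) t := by
  have hcont : ContinuousAt (fun s => log |2 * sin s|) t :=
    ContinuousAt.log (by fun_prop) (by simpa using ht)
  have hmeas : Measurable fun s => log |2 * sin s| := by fun_prop
  rw [← log_abs]
  exact (intervalIntegral.integral_hasDerivAt_right (intervalIntegrable_log_two_mul_sin 0 t)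
    hmeas.stronglyMeasurable.stronglyMeasurableAtFilter hcont).neg

lemma hasDerivAt_log_two_mul_sin {t : ℝ} (ht : sin t ≠ 0) :
    HasDerivAt (fun s => log (2 * sin s)) (cot t) t := by
  convert ((hasDerivAt_sin t).const_mul 2).log (mul_ne_zero two_ne_zero ht) using 1
  rw [cot_eq_cos_div_sin, mul_div_mul_left _ _ two_ne_zero]

lemma cot_add_cot {a b : ℝ} (ha : sin a ≠ 0) (hb : sin b ≠ 0) :
    cot a + cot b = sin (a + b) / (sin a * sin b) := by
  rw [cot_eq_cos_div_sin, cot_eq_cos_div_sin, sin_add]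
  field_simp
  ring

lemma cot_mul_cot_add_eq_one {a b c : ℝ} (ha : sin a ≠ 0) (hb : sin b ≠ 0) (hc : sin c ≠ 0)
    (h : a + b + c = π) : cot a * cot b + cot b * cot c + cot c * cot a = 1 := by
  obtain rfl : c = π - (a + b) := by linarith
  rw [sin_pi_sub] at hc
  have hcot : cot (π - (a + b)) = -cos (a + b) / sin (a + b) := by
    rw [cot_eq_cos_div_sin, cos_pi_sub, sin_pi_sub]
  calc cot a * cot b + cot b * cot (π - (a + b)) + cot (π - (a + b)) * cot a
      = cot a * cot b + cot (π - (a + b)) * (cot a + cot b) := by ring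
    _ = (cos a * cos b - cos (a + b)) / (sin a * sin b) := by
      rw [hcot, cot_add_cot ha hb, cot_eq_cos_div_sin, cot_eq_cos_div_sin]
      field_simp
      ring
    _ = 1 := by
      rw [cos_add, sub_sub_cancel, div_self (mul_ne_zero ha hb)]

lemma mul_sq_add_mul_sq_add_mul_sq_nonneg {R : Type*} [CommRing R] [LinearOrder R]
    [IsStrictOrderedRing R] {p q r u v w : R} (hpq : 0 < p + q)
    (hpqr : 0 ≤ p * q + q * r + r * p) (hsum : u + v + w = 0) :
    0 ≤ p * u ^ 2 + q * v ^ 2 + r * w ^ 2 := by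
  have hid : (p + q) * (p * u ^ 2 + q * v ^ 2 + r * w ^ 2) =
      (p * u - q * v) ^ 2 + (p * q + q * r + r * p) * w ^ 2 := by
    obtain rfl : w = -(u + v) := eq_neg_of_add_eq_zero_right hsum
    ring
  refine nonneg_of_mul_nonneg_right ?_ hpq
  rw [hid]
  positivity

lemma sin_pos_of_sum_eq_pi {ι : Type*} [Fintype ι] [Nontrivial ι] {α : ι → ℝ}
    (hα : ∀ i, 0 < α i) (hsum : ∑ i, α i = π) (i : ι) : 0 < sin (α i) := by
  refine sin_pos_of_pos_of_lt_pi (hα i) ?_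
  obtain ⟨j, hj⟩ := exists_ne i
  exact hsum ▸ Finset.single_lt_sum hj (Finset.mem_univ i) (Finset.mem_univ j) (hα j)
    fun k _ _ => (hα k).le

lemma sum_cot_mul_sq_nonneg {α d : Fin 3 → ℝ} (hα : ∀ i, 0 < α i) (hsum : ∑ i, α i = π)
    (hd : ∑ i, d i = 0) : 0 ≤ ∑ i, cot (α i) * d i ^ 2 := by
  have hsin := sin_pos_of_sum_eq_pi hα hsum
  rw [Fin.sum_univ_three] at hsum hd ⊢
  refine mul_sq_add_mul_sq_add_mul_sq_nonneg ?_ ?_ hd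
  · have hadd : sin (α 0 + α 1) = sin (α 2) := by
      rw [← sin_pi_sub, ← hsum, add_sub_cancel_left]
    rw [cot_add_cot (hsin 0).ne' (hsin 1).ne', hadd]
    exact div_pos (hsin 2) (mul_pos (hsin 0) (hsin 1))
  · rw [cot_mul_cot_add_eq_one (hsin 0).ne' (hsin 1).ne' (hsin 2).ne' hsum]
    exact zero_le_one

section Segment

open AffineMap

lemma lineMap_pos {a b t : ℝ} (ha : 0 < a) (hb : 0 ≤ b) (ht : t ∈ Ico (0 : ℝ) 1) :
    0 < lineMap a b t := by
  rw [lineMap_apply_ring]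
  exact add_pos_of_pos_of_nonneg (mul_pos (sub_pos.2 ht.2) ha) (mul_nonneg ht.1 hb)

variable {ι : Type*} [Fintype ι] {α θ : ι → ℝ}

lemma sum_lineMap_eq {s : ℝ} (hα : ∑ i, α i = s) (hθ : ∑ i, θ i = s) (t : ℝ) :
    ∑ i, lineMap (α i) (θ i) t = s := by
  simp only [lineMap_apply_ring, Finset.sum_add_distrib, ← Finset.mul_sum, hα, hθ]
  ring

lemma sin_lineMap_pos [Nontrivial ι] (hα : ∀ i, 0 < α i) (hα_sum : ∑ i, α i = π)
    (hθ : ∀ i, 0 ≤ θ i) (hθ_sum : ∑ i, θ i = π) {t : ℝ} (ht : t ∈ Ico (0 : ℝ) 1) (i : ι) :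
    0 < sin (lineMap (α i) (θ i) t) :=
  sin_pos_of_sum_eq_pi (fun i => lineMap_pos (hα i) (hθ i) ht)
    (sum_lineMap_eq hα_sum hθ_sum t) i

lemma hasDerivAt_sum_lob_lineMap {t : ℝ} (h : ∀ i, sin (lineMap (α i) (θ i) t) ≠ 0) :
    HasDerivAt (fun s => ∑ i, Lob (lineMap (α i) (θ i) s))
      (∑ i, -log (2 * sin (lineMap (α i) (θ i) t)) * (θ i - α i)) t :=
  HasDerivAt.fun_sum fun i _ => (hasDerivAt_lob (h i)).comp t hasDerivAt_lineMap

lemma hasDerivAt_sum_neg_log_lineMap {t : ℝ} (h : ∀ i, sin (lineMap (α i) (θ i) t) ≠ 0) :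
    HasDerivAt (fun s => ∑ i, -log (2 * sin (lineMap (α i) (θ i) s)) * (θ i - α i))
      (-∑ i, cot (lineMap (α i) (θ i) t) * (θ i - α i) ^ 2) t := by
  refine (HasDerivAt.fun_sum fun i (_ : i ∈ Finset.univ) =>
    ((hasDerivAt_log_two_mul_sin (h i)).comp t hasDerivAt_lineMap).neg.mul_const
      (θ i - α i)).congr_deriv ?_
  rw [← Finset.sum_neg_distrib]
  exact Finset.sum_congr rfl fun i _ => by ring

end Segment

section Concavity

open AffineMap

variable {α θ : Fin 3 → ℝ}

lemma concaveOn_sum_lob_lineMap (hα : ∀ i, 0 < α i) (hα_sum : ∑ i, α i = π)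
    (hθ : ∀ i, 0 ≤ θ i) (hθ_sum : ∑ i, θ i = π) :
    ConcaveOn ℝ (Icc 0 1) fun t : ℝ => ∑ i, Lob (lineMap (α i) (θ i) t) := by
  have hmem : interior (Icc (0 : ℝ) 1) ⊆ Ico 0 1 :=
    interior_Icc.trans_subset Ioo_subset_Ico_self
  have hsin : ∀ t ∈ interior (Icc (0 : ℝ) 1), ∀ i, sin (lineMap (α i) (θ i) t) ≠ 0 :=
    fun t ht i => (sin_lineMap_pos hα hα_sum hθ hθ_sum (hmem ht) i).ne'
  refine concaveOn_of_hasDerivWithinAt2_nonpos (convex_Icc 0 1) ?_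
    (fun t ht => (hasDerivAt_sum_lob_lineMap (hsin t ht)).hasDerivWithinAt)
    (fun t ht => (hasDerivAt_sum_neg_log_lineMap (hsin t ht)).hasDerivWithinAt)
    fun t ht => neg_nonpos.2 <| sum_cot_mul_sq_nonneg
      (fun i => lineMap_pos (hα i) (hθ i) (hmem ht)) (sum_lineMap_eq hα_sum hθ_sum t) ?_
  · exact (continuous_finsetSum _ fun i _ =>
      continuous_lob.comp lineMap_continuous).continuousOn
  · rw [Finset.sum_sub_distrib, hα_sum, hθ_sum, sub_self]

lemma sum_lob_le_tangent (hα : ∀ i, 0 < α i) (hα_sum : ∑ i, α i = π) (hθ : ∀ i, 0 ≤ θ i)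
    (hθ_sum : ∑ i, θ i = π) :
    ∑ i, Lob (θ i) ≤ ∑ i, Lob (α i) + ∑ i, -log (2 * sin (α i)) * (θ i - α i) := by
  have hderiv := hasDerivAt_sum_lob_lineMap (t := 0)
    fun i => (sin_lineMap_pos hα hα_sum hθ hθ_sum ⟨le_rfl, zero_lt_one⟩ i).ne'
  have hslope := (concaveOn_sum_lob_lineMap hα hα_sum hθ hθ_sum).slope_le_of_hasDerivAt
    ⟨le_rfl, zero_le_one⟩ ⟨zero_le_one, le_rfl⟩ zero_lt_one hderiv
  simp only [slope_def_field, lineMap_apply_zero, lineMap_apply_one, sub_zero, div_one] at hslope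
  linarith

end Concavity

lemma fin_three_add_add (i : Fin 3) :
    i + 1 + 1 = i + 2 ∧ i + 1 + 2 = i ∧ i + 2 + 1 = i ∧ i + 2 + 2 = i + 1 := by
  decide +revert

lemma fin_three_eq_or (i j : Fin 3) : j = i ∨ j = i + 1 ∨ j = i + 2 := by
  decide +revert

lemma ang_dist {V P : Type*} [NormedAddCommGroup V] [InnerProductSpace ℝ V] [MetricSpace P]
    [NormedAddTorsor V P] (p : Fin 3 → P) (i : Fin 3) :
    ang i (fun j => dist (p (j + 1)) (p (j + 2))) = ∠ (p (i + 1)) (p i) (p (i + 2)) := by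
  obtain ⟨h₁₁, h₁₂, h₂₁, h₂₂⟩ := fin_three_add_add i
  rw [ang, EuclideanGeometry.angle, InnerProductGeometry.angle,
    real_inner_eq_norm_mul_self_add_norm_mul_self_sub_norm_sub_mul_self_div_two]
  simp only [h₁₁, h₁₂, h₂₁, h₂₂, vsub_sub_vsub_cancel_right, ← dist_eq_norm_vsub]
  rw [dist_comm (p i) (p (i + 1))]
  congr 1
  ring

section Triangle

variable {l : Fin 3 → ℝ}

lemma cos_ang (hl : ∀ i, 0 < l i) (htri : ∀ i, l i ≤ l (i + 1) + l (i + 2)) (i : Fin 3) :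
    cos (ang i l) = (l (i + 1) ^ 2 + l (i + 2) ^ 2 - l i ^ 2) / (2 * l (i + 1) * l (i + 2)) := by
  obtain ⟨h₁₁, h₁₂, h₂₁, h₂₂⟩ := fin_three_add_add i
  have htri₁ := htri (i + 1)
  have htri₂ := htri (i + 2)
  rw [h₁₁, h₁₂] at htri₁
  rw [h₂₁, h₂₂] at htri₂
  have hpos : 0 < 2 * l (i + 1) * l (i + 2) :=
    mul_pos (mul_pos two_pos (hl _)) (hl _)
  have hle : l i ^ 2 ≤ (l (i + 1) + l (i + 2)) ^ 2 := pow_le_pow_left₀ (hl i).le (htri i) 2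
  have hge : (l (i + 1) - l (i + 2)) ^ 2 ≤ l i ^ 2 :=
    sq_le_sq' (by linarith) (by linarith)
  refine cos_arccos ?_ ?_
  · rw [le_div_iff₀ hpos]
    linarith
  · rw [div_le_one hpos]
    linarith

lemma exists_triangle (hl : ∀ i, 0 < l i) (htri : ∀ i, l i ≤ l (i + 1) + l (i + 2)) :
    ∃ p : Fin 3 → ℂ, (∀ i, dist (p (i + 1)) (p (i + 2)) = l i) ∧
      ∀ i, ∠ (p (i + 1)) (p i) (p (i + 2)) = ang i l := by
  suffices h : ∃ p : Fin 3 → ℂ, ∀ i, dist (p (i + 1)) (p (i + 2)) = l i by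
    obtain ⟨p, hp⟩ := h
    exact ⟨p, hp, fun i => by rw [← ang_dist p i, funext hp]⟩
  have hcos : cos (ang 0 l) * (2 * l 1 * l 2) = l 1 ^ 2 + l 2 ^ 2 - l 0 ^ 2 :=
    (eq_div_iff (mul_pos (mul_pos two_pos (hl 1)) (hl 2)).ne').1 (cos_ang hl htri 0)
  have hsq := sin_sq_add_cos_sq (ang 0 l)
  refine ⟨![0, ⟨l 2, 0⟩, ⟨l 1 * cos (ang 0 l), l 1 * sin (ang 0 l)⟩], fun i => ?_⟩
  rw [Complex.dist_eq_re_im, sqrt_eq_iff_eq_sq (by positivity) (hl i).le]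
  fin_cases i
  · change (l 2 - l 1 * cos (ang 0 l)) ^ 2 + (0 - l 1 * sin (ang 0 l)) ^ 2 = l 0 ^ 2
    linear_combination l 1 ^ 2 * hsq - hcos
  · change (l 1 * cos (ang 0 l) - 0) ^ 2 + (l 1 * sin (ang 0 l) - 0) ^ 2 = l 1 ^ 2
    linear_combination l 1 ^ 2 * hsq
  · change (0 - l 2) ^ 2 + (0 - 0) ^ 2 = l 2 ^ 2
    ring

lemma sum_ang_eq_pi (hl : ∀ i, 0 < l i) (htri : ∀ i, l i ≤ l (i + 1) + l (i + 2)) :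
    ∑ i, ang i l = π := by
  obtain ⟨p, hdist, hang⟩ := exists_triangle hl htri
  have hne : p 0 ≠ p 1 := dist_pos.1 ((hl 2).trans_eq (hdist 2).symm)
  have h₀ : ∠ (p 1) (p 0) (p 2) = ang 0 l := hang 0
  have h₁ : ∠ (p 2) (p 1) (p 0) = ang 1 l := hang 1
  have h₂ : ∠ (p 0) (p 2) (p 1) = ang 2 l := hang 2
  rw [Fin.sum_univ_three, ← h₀, ← h₁, ← h₂, add_right_comm]
  exact angle_add_angle_add_angle_eq_pi (p 2) hne

lemma sin_ang_mul (hl : ∀ i, 0 < l i) (htri : ∀ i, l i ≤ l (i + 1) + l (i + 2)) (i : Fin 3) :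
    sin (ang i l) * l (i + 1) = sin (ang (i + 1) l) * l i := by
  obtain ⟨p, hdist, hang⟩ := exists_triangle hl htri
  obtain ⟨h₁₁, h₁₂, -⟩ := fin_three_add_add i
  rw [← hang, ← hang, ← hdist, ← hdist, h₁₁, h₁₂, dist_comm (p (i + 2)), dist_comm (p (i + 1)),
    law_sin]

lemma exists_sin_ang_eq_mul (hl : ∀ i, 0 < l i) (htri : ∀ i, l i ≤ l (i + 1) + l (i + 2)) :
    ∃ k, ∀ i, sin (ang i l) = k * l i := by
  have h₀ : sin (ang 0 l) * l 1 = sin (ang 1 l) * l 0 := sin_ang_mul hl htri 0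
  have h₂ : sin (ang 2 l) * l 0 = sin (ang 0 l) * l 2 := sin_ang_mul hl htri 2
  refine ⟨sin (ang 0 l) / l 0, fun i => ?_⟩
  rw [div_mul_eq_mul_div, eq_div_iff (hl 0).ne']
  fin_cases i
  exacts [rfl, h₀.symm, h₂]

lemma ang_pos (hl : ∀ i, 0 < l i) (htri : ∀ i, l i < l (i + 1) + l (i + 2)) (i : Fin 3) :
    0 < ang i l := by
  obtain ⟨h₁₁, h₁₂, h₂₁, h₂₂⟩ := fin_three_add_add i
  have htri₁ := htri (i + 1)
  have htri₂ := htri (i + 2)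
  rw [h₁₁, h₁₂] at htri₁
  rw [h₂₁, h₂₂] at htri₂
  have hlt : (l (i + 1) - l (i + 2)) ^ 2 < l i ^ 2 := sq_lt_sq' (by linarith) (by linarith)
  rw [ang, arccos_pos, div_lt_one (mul_pos (mul_pos two_pos (hl _)) (hl _))]
  linarith

lemma ang_of_add_le (hl : ∀ i, 0 < l i) {i : Fin 3} (h : l (i + 1) + l (i + 2) ≤ l i)
    (j : Fin 3) : ang j l = if j = i then π else 0 := by
  obtain ⟨h₁₁, h₁₂, h₂₁, h₂₂⟩ := fin_three_add_add i
  have l₀ := hl i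
  have l₁ := hl (i + 1)
  have l₂ := hl (i + 2)
  rcases fin_three_eq_or i j with rfl | rfl | rfl
  · have hsq := pow_le_pow_left₀ (add_pos l₁ l₂).le h 2
    rw [if_pos rfl]
    refine arccos_of_le_neg_one ?_
    rw [div_le_iff₀ (by positivity)]
    linarith
  · have hsq := pow_le_pow_left₀ l₁.le (le_sub_iff_add_le.2 h) 2
    rw [if_neg (by simp), ang, h₁₁, h₁₂]
    refine arccos_of_one_le ?_
    rw [one_le_div (by positivity)]
    linarith
  · have hsq := pow_le_pow_left₀ l₂.le (le_sub_iff_add_le'.2 h) 2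
    rw [if_neg (by simp), ang, h₂₁, h₂₂]
    refine arccos_of_one_le ?_
    rw [one_le_div (by positivity)]
    linarith

lemma continuousAt_ang (hl : ∀ i, 0 < l i) (i : Fin 3) : ContinuousAt (ang i) l := by
  unfold ang
  refine continuous_arccos.continuousAt.comp (ContinuousAt.div (by fun_prop) (by fun_prop) ?_)
  exact (mul_pos (mul_pos two_pos (hl _)) (hl _)).ne'

/-- The energy `∑ Λ(αᵢ) + ∑ xᵢ (αᵢ - θᵢ)` of the triangle with edge lengths `lᵢ = exp xᵢ`, inner
angles `αᵢ` and prescribed angles `θᵢ`. It is a function of the lengths, with `xᵢ` written as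
`log (l i)`, because the triangle inequalities are linear in the lengths. It is meaningful
only for positive `l`. -/
noncomputable def angleEnergy (θ l : Fin 3 → ℝ) : ℝ :=
  ∑ i, Lob (ang i l) + ∑ i, log (l i) * (ang i l - θ i)

lemma continuousAt_angleEnergy (θ : Fin 3 → ℝ) (hl : ∀ i, 0 < l i) :
    ContinuousAt (angleEnergy θ) l := by
  have hang := continuousAt_ang hl
  refine ContinuousAt.add (tendsto_finsetSum _ fun i _ => ?_) (tendsto_finsetSum _ fun i _ => ?_)
  · exact continuous_lob.continuousAt.comp (hang i)
  · exact ((continuousAt_apply i l).log (hl i).ne').mul ((hang i).sub continuousAt_const)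

variable {θ : Fin 3 → ℝ}

lemma sum_lob_le_angleEnergy_of_lt (hθ : ∀ i, 0 ≤ θ i) (hsum : ∑ i, θ i = π)
    (hl : ∀ i, 0 < l i) (htri : ∀ i, l i < l (i + 1) + l (i + 2)) :
    ∑ i, Lob (θ i) ≤ angleEnergy θ l := by
  have hα := ang_pos hl htri
  have hα_sum := sum_ang_eq_pi hl fun i => (htri i).le
  obtain ⟨k, hk⟩ := exists_sin_ang_eq_mul hl fun i => (htri i).le
  have hsin : ∀ i, 0 < k * l i := fun i => hk i ▸ sin_pos_of_sum_eq_pi hα hα_sum i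
  have hk_pos : 0 < k := pos_of_mul_pos_left (hsin 0) (hl 0).le
  have hlog : ∀ i, log (2 * sin (ang i l)) = log (2 * k) + log (l i) := fun i => by
    rw [hk, ← mul_assoc, log_mul (by positivity) (hl i).ne']
  have hzero : ∑ i, (ang i l - θ i) = 0 := by
    rw [Finset.sum_sub_distrib, hα_sum, hsum, sub_self]
  calc ∑ i, Lob (θ i)
      ≤ ∑ i, Lob (ang i l) + ∑ i, -log (2 * sin (ang i l)) * (θ i - ang i l) :=
        sum_lob_le_tangent hα hα_sum hθ hsum
    _ = ∑ i, Lob (ang i l) +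
        ∑ i, (log (2 * k) * (ang i l - θ i) + log (l i) * (ang i l - θ i)) := by
      congr 1
      exact Finset.sum_congr rfl fun i _ => by rw [hlog]; ring
    _ = angleEnergy θ l := by
      rw [Finset.sum_add_distrib, ← Finset.mul_sum, hzero, mul_zero, zero_add, angleEnergy]

lemma sum_lob_le_angleEnergy_of_le (hθ : ∀ i, 0 ≤ θ i) (hsum : ∑ i, θ i = π)
    (hl : ∀ i, 0 < l i) (htri : ∀ i, l i ≤ l (i + 1) + l (i + 2)) :
    ∑ i, Lob (θ i) ≤ angleEnergy θ l := by
  have hshift : Continuous fun ε : ℝ => fun i => l i + ε := by fun_prop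
  have hlim : Tendsto (fun ε : ℝ => angleEnergy θ fun i => l i + ε) (𝓝[>] 0)
      (𝓝 (angleEnergy θ l)) := by
    refine Tendsto.mono_left ?_ nhdsWithin_le_nhds
    refine (continuousAt_angleEnergy θ hl).tendsto.comp ?_
    simpa using hshift.tendsto 0
  refine ge_of_tendsto hlim ?_
  filter_upwards [self_mem_nhdsWithin] with ε hε
  rw [mem_Ioi] at hε
  refine sum_lob_le_angleEnergy_of_lt hθ hsum (fun i => add_pos (hl i) hε) fun i => ?_
  linarith [htri i]

lemma triangle_ineq_of_eq_add (hl : ∀ j, 0 < l j) {i : Fin 3} (h : l i = l (i + 1) + l (i + 2))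
    (j : Fin 3) : l j ≤ l (j + 1) + l (j + 2) := by
  obtain ⟨h₁₁, h₁₂, h₂₁, h₂₂⟩ := fin_three_add_add i
  have l₁ := hl (i + 1)
  have l₂ := hl (i + 2)
  rcases fin_three_eq_or i j with rfl | rfl | rfl
  · exact h.le
  · rw [h₁₁, h₁₂]
    linarith
  · rw [h₂₁, h₂₂]
    linarith

lemma angleEnergy_update_le (hl : ∀ j, 0 < l j) {i : Fin 3} (hθ : θ i ≤ π) {s : ℝ}
    (hs : l (i + 1) + l (i + 2) ≤ s) (hs_le : s ≤ l i) :
    angleEnergy θ (Function.update l i s) ≤ angleEnergy θ l := by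
  have hs_pos : 0 < s := (add_pos (hl _) (hl _)).trans_le hs
  have hupdate : ∀ j, 0 < Function.update l i s j :=
    (Function.forall_update_iff l fun _ r => 0 < r).2 ⟨hs_pos, fun j _ => hl j⟩
  have hang : ∀ j, ang j (Function.update l i s) = ang j l := fun j => by
    rw [ang_of_add_le hl (hs.trans hs_le) j, ang_of_add_le (i := i) hupdate]
    rwa [Function.update_self, Function.update_of_ne (by simp), Function.update_of_ne (by simp)]
  simp only [angleEnergy, hang]
  refine add_le_add_right (Finset.sum_le_sum fun j _ => ?_) _
  rcases eq_or_ne j i with rfl | hj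
  · rw [Function.update_self, ang_of_add_le hl (hs.trans hs_le), if_pos rfl]
    exact mul_le_mul_of_nonneg_right (log_le_log hs_pos hs_le) (sub_nonneg.2 hθ)
  · rw [Function.update_of_ne hj]

lemma sum_lob_le_angleEnergy (hθ : ∀ i, 0 ≤ θ i) (hsum : ∑ i, θ i = π) (hl : ∀ i, 0 < l i) :
    ∑ i, Lob (θ i) ≤ angleEnergy θ l := by
  by_cases htri : ∀ i, l i ≤ l (i + 1) + l (i + 2)
  · exact sum_lob_le_angleEnergy_of_le hθ hsum hl htri
  push Not at htri
  obtain ⟨i, hi⟩ := htri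
  have hθ_le : θ i ≤ π :=
    hsum ▸ Finset.single_le_sum (fun k _ => hθ k) (Finset.mem_univ i)
  set l' := Function.update l i (l (i + 1) + l (i + 2))
  have hl' : ∀ j, 0 < l' j := (Function.forall_update_iff l fun _ r => 0 < r).2
    ⟨add_pos (hl _) (hl _), fun j _ => hl j⟩
  have hflat : l' i = l' (i + 1) + l' (i + 2) := by simp [l']
  calc ∑ j, Lob (θ j)
      ≤ angleEnergy θ l' :=
        sum_lob_le_angleEnergy_of_le hθ hsum hl' (triangle_ineq_of_eq_add hl' hflat)
    _ ≤ angleEnergy θ l := angleEnergy_update_le hl hθ_le le_rfl hi.le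

end Triangle

theorem stmt7 (θ : Fin 3 → ℝ) (hθ : ∀ i, 0 ≤ θ i)
    (hsum : θ 0 + θ 1 + θ 2 = Real.pi) (x : Fin 3 → ℝ) :
    ∑ i : Fin 3, Lob (θ i) ≤
      ∑ i : Fin 3, Lob (ang i (fun m => Real.exp (x m))) +
        ∑ i : Fin 3, x i * (ang i (fun m => Real.exp (x m)) - θ i) := by
  have hsum' : ∑ i, θ i = π := by rw [Fin.sum_univ_three, hsum]
  simpa only [angleEnergy, log_exp] using
    sum_lob_le_angleEnergy hθ hsum' fun i => exp_pos (x i)
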